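/- Let J(v) be the 9×9 matrix with polynomial entries in the coefficients (v_{-8},...,v_8) of a binary octic v, as given explicitly in the paper's Appendix (five ω-columns quadratic in v, four columns λ, φ_{-2}, φ_0, φ_2 linear in v). Then det J(v) is a nonzero scalar multiple of the discriminant of the binary octic v. -/

import Mathlib

open MvPolynomial

noncomputable section

variable {K : Type*} [CommRing K]

/-- The ω⁻⁴ column of J (common factor 9216 removed), from Appendix A. -/
def c0 (t : Fin 9 → K) : Fin 9 → K :=
  ![280*t 0*t 6 - 280*t 1*t 5,
    -245*t 2*t 5 + 70*t 0*t 7 + 175*t 1*t 6,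
    70*t 2*t 6 - 210*t 3*t 5 + 130*t 1*t 7 + 10*t 0*t 8,
    -175*t 4*t 5 - 35*t 3*t 6 + 35*t 1*t 8 + 175*t 2*t 7,
    84*t 2*t 8 + 196*t 3*t 7 - 140*t 5^2 - 140*t 4*t 6,
    -350*t 5*t 6 + 175*t 4*t 7 + 175*t 3*t 8,
    350*t 4*t 8 - 350*t 6^2,
    700*t 5*t 8 - 700*t 7*t 6,
    -1400*t 7^2 + 1400*t 8*t 6]

/-- The ω⁻² column of J (common factor 9216 removed). -/
def c1 (t : Fin 9 → K) : Fin 9 → K :=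
  ![-1400*t 0*t 5 + 1400*t 1*t 4,
    -385*t 0*t 6 - 840*t 1*t 5 + 1225*t 2*t 4,
    -280*t 2*t 5 + 1050*t 3*t 4 - 70*t 0*t 7 - 700*t 1*t 6,
    -910*t 2*t 6 + 280*t 3*t 5 + 875*t 4^2 - 240*t 1*t 7 - 5*t 0*t 8,
    1540*t 4*t 5 - 952*t 3*t 6 - 28*t 1*t 8 - 560*t 2*t 7,
    -105*t 2*t 8 - 1120*t 3*t 7 + 1400*t 5^2 - 175*t 4*t 6,
    2100*t 5*t 6 - 1750*t 4*t 7 - 350*t 3*t 8,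
    2450*t 6^2 - 1050*t 4*t 8 - 1400*t 5*t 7,
    -2800*t 5*t 8 + 2800*t 7*t 6]

/-- The ω⁰ column of J (common factor 9216 removed). -/
def c2 (t : Fin 9 → K) : Fin 9 → K :=
  ![-2800*t 1*t 3 + 2800*t 0*t 4,
    -2450*t 2*t 3 + 875*t 0*t 5 + 1575*t 1*t 4,
    210*t 0*t 6 - 2100*t 3^2 + 1540*t 1*t 5 + 350*t 2*t 4,
    1890*t 2*t 5 - 2625*t 3*t 4 + 35*t 0*t 7 + 700*t 1*t 6,
    1568*t 2*t 6 + 336*t 3*t 5 - 2100*t 4^2 + 192*t 1*t 7 + 4*t 0*t 8,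
    -2625*t 4*t 5 + 1890*t 3*t 6 + 35*t 1*t 8 + 700*t 2*t 7,
    210*t 2*t 8 + 1540*t 3*t 7 - 2100*t 5^2 + 350*t 4*t 6,
    -2450*t 5*t 6 + 1575*t 4*t 7 + 875*t 3*t 8,
    2800*t 4*t 8 - 2800*t 5*t 7]

/-- The ω² column of J (common factor 9216 removed). -/
def c3 (t : Fin 9 → K) : Fin 9 → K :=
  ![2800*t 2*t 1 - 2800*t 3*t 0,
    -1400*t 1*t 3 - 1050*t 0*t 4 + 2450*t 2^2,
    2100*t 2*t 3 - 350*t 0*t 5 - 1750*t 1*t 4,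
    -105*t 0*t 6 + 1400*t 3^2 - 1120*t 1*t 5 - 175*t 2*t 4,
    -952*t 2*t 5 + 1540*t 3*t 4 - 28*t 0*t 7 - 560*t 1*t 6,
    -910*t 2*t 6 + 280*t 3*t 5 + 875*t 4^2 - 240*t 1*t 7 - 5*t 0*t 8,
    1050*t 4*t 5 - 280*t 3*t 6 - 70*t 1*t 8 - 700*t 2*t 7,
    1225*t 4*t 6 - 385*t 2*t 8 - 840*t 3*t 7,
    1400*t 4*t 7 - 1400*t 3*t 8]

/-- The ω⁴ column of J (common factor 9216 removed). -/
def c4 (t : Fin 9 → K) : Fin 9 → K :=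
  ![1400*t 2*t 0 - 1400*t 1^2,
    -700*t 2*t 1 + 700*t 3*t 0,
    -350*t 2^2 + 350*t 0*t 4,
    -350*t 2*t 3 + 175*t 0*t 5 + 175*t 1*t 4,
    84*t 0*t 6 - 140*t 3^2 + 196*t 1*t 5 - 140*t 2*t 4,
    -35*t 2*t 5 - 175*t 3*t 4 + 35*t 0*t 7 + 175*t 1*t 6,
    70*t 2*t 6 - 210*t 3*t 5 + 130*t 1*t 7 + 10*t 0*t 8,
    70*t 1*t 8 - 245*t 3*t 6 + 175*t 2*t 7,
    -280*t 3*t 7 + 280*t 2*t 8]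

/-- The λ column of J. -/
def c5 (t : Fin 9 → K) : Fin 9 → K := t

/-- The φ₋₂ column of J. -/
def c6 (t : Fin 9 → K) : Fin 9 → K :=
  ![-16*t 1, -14*t 2, -12*t 3, -10*t 4, -8*t 5, -6*t 6, -4*t 7, -2*t 8, 0]

/-- The φ₀ column of J. -/
def c7 (t : Fin 9 → K) : Fin 9 → K :=
  ![16*t 0, 12*t 1, 8*t 2, 4*t 3, 0, -4*t 5, -8*t 6, -12*t 7, -16*t 8]

/-- The φ₂ column of J. -/
def c8 (t : Fin 9 → K) : Fin 9 → K :=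
  ![0, 2*t 0, 4*t 1, 6*t 2, 8*t 3, 10*t 4, 12*t 5, 14*t 6, 16*t 7]

/-- The 9×9 matrix J(T) from Appendix A of the paper (the factor 9216 = 2¹⁰3²
is restored on the five ω-columns). -/
def Jmat (t : Fin 9 → K) : Matrix (Fin 9) (Fin 9) K :=
  Matrix.of fun i j =>
    (![fun i' => (9216 : K) * c0 t i', fun i' => (9216 : K) * c1 t i',
       fun i' => (9216 : K) * c2 t i', fun i' => (9216 : K) * c3 t i',
       fun i' => (9216 : K) * c4 t i',
       c5 t, c6 t, c7 t, c8 t] j) i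

/-- The coefficient vector (binomial basis) of the binary octic
∏ᵢ (wᵢ·x - zᵢ·y), whose roots are [zᵢ : wᵢ]. -/
def coeffVec (z w : Fin 8 → ℂ) : Fin 9 → ℂ := fun k =>
  MvPolynomial.coeff (Finsupp.single (0 : Fin 2) (8 - (k : ℕ)) + Finsupp.single (1 : Fin 2) (k : ℕ))
    (∏ i : Fin 8, (MvPolynomial.C (w i) * X 0 - MvPolynomial.C (z i) * X 1))
    / (Nat.choose 8 k : ℂ)


/-- The octic attached to `v`, dehomogenised. -/
def octic (v : Fin 9 → ℂ) (x : ℂ) : ℂ :=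
  v 0*x^8 + 8*v 1*x^7 + 28*v 2*x^6 + 56*v 3*x^5 + 70*v 4*x^4 + 56*v 5*x^3 + 28*v 6*x^2
    + 8*v 7*x + v 8

/-- The derivative of `octic`. -/
def octicD (v : Fin 9 → ℂ) (x : ℂ) : ℂ :=
  8*v 0*x^7 + 56*v 1*x^6 + 168*v 2*x^5 + 280*v 3*x^4 + 280*v 4*x^3 + 168*v 5*x^2 + 56*v 6*x
    + 8*v 7

/-- Row 0 picks the leading coefficient, row `i+1` evaluates at the root `r i`. -/
def evalMat (r : Fin 8 → ℂ) : Matrix (Fin 9) (Fin 9) ℂ :=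
  Matrix.of (Fin.cons (fun k => if k = 0 then 1 else 0)
    (fun i k => (Nat.choose 8 k : ℂ) * r i ^ (8 - (k : ℕ))))

/-- Reversed Vandermonde matrix. -/
def revV (r : Fin 8 → ℂ) : Matrix (Fin 8) (Fin 8) ℂ :=
  Matrix.of fun i m => r i ^ (7 - (m : ℕ))

/-- Velocities of the roots along the columns of `J`. -/
def velT (v : Fin 9 → ℂ) : Matrix (Fin 8) (Fin 8) ℂ :=
  Matrix.of ![![-322560*v 0, 0, 0, 0, 0, 0, 0, 0],
    ![-2580480*v 1, 322560*v 0, 0, 0, 0, 0, 0, 0],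
    ![-9031680*v 2, 2580480*v 1, -322560*v 0, 0, 0, 0, 0, 0],
    ![-18063360*v 3, 9031680*v 2, -2580480*v 1, 322560*v 0, 0, 0, 0, 0],
    ![-22579200*v 4, 18063360*v 3, -9031680*v 2, 2580480*v 1, -322560*v 0, 0, 0, 0],
    ![-17740800*v 5, 20966400*v 4, -14837760*v 3, 5806080*v 2, -967680*v 1, 2, 0, 0],
    ![-8064000*v 6, 12902400*v 5, -11289600*v 4, 5160960*v 3, -967680*v 2, 0, 4, 0],
    ![-1612800*v 7, 3225600*v 6, -3225600*v 5, 1612800*v 4, -322560*v 3, 0, 0, 2]]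

lemma det_evalMat (r : Fin 8 → ℂ) :
    (evalMat r).det = (∏ k : Fin 8, (Nat.choose 8 (k + 1) : ℂ)) * (revV r).det := by
  rw [Matrix.det_succ_row_zero, Fin.sum_univ_succ, Finset.sum_eq_zero]
  · rw [← Matrix.det_mul_row]
    simp [evalMat]
    congr 1
    ext i k
    simp [revV]
  · intro k _
    simp [evalMat]

lemma det_velT : ∃ c : ℂ, c ≠ 0 ∧ ∀ v : Fin 9 → ℂ, (velT v).det = c * v 0 ^ 5 := by
  refine ⟨(-35*9216)*(35*9216)*(-35*9216)*(35*9216)*(-35*9216)*2*4*2, by norm_num, fun v => ?_⟩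
  rw [Matrix.det_of_isLowerTriangular]
  · simp [Fin.prod_univ_succ, velT]
    ring
  · intro i j hij
    change i < j at hij
    fin_cases i <;> fin_cases j <;> first | (exfalso; revert hij; decide) | simp [velT]

lemma evalMat_mul_zero (v : Fin 9 → ℂ) (r : Fin 8 → ℂ) (j : Fin 9) :
    (evalMat r * Jmat v) 0 j = Jmat v 0 j := by
  simp [Matrix.mul_apply, evalMat]

lemma evalMat_mul_succ (v : Fin 9 → ℂ) (r : Fin 8 → ℂ) (i : Fin 8) (j : Fin 9) :
    (evalMat r * Jmat v) i.succ j =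
      Jmat v 0 j * r i^8 + 8*Jmat v 1 j * r i^7 + 28*Jmat v 2 j*r i^6 + 56*Jmat v 3 j * r i^5
      + 70*Jmat v 4 j*r i^4 + 56*Jmat v 5 j*r i^3 + 28*Jmat v 6 j * r i^2
      + 8 * Jmat v 7 j * r i + Jmat v 8 j := by
  have h2 : Nat.choose 8 2 = 28 := by decide
  have h3 : Nat.choose 8 3 = 56 := by decide
  have h4 : Nat.choose 8 4 = 70 := by decide
  have h5 : Nat.choose 8 5 = 56 := by decide
  have h6 : Nat.choose 8 6 = 28 := by decide
  simp [Matrix.mul_apply, evalMat, Fin.sum_univ_succ, h2, h3, h4, h5, h6]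
  ring

lemma revV_mul (v : Fin 9 → ℂ) (r : Fin 8 → ℂ) (i j : Fin 8) :
    (revV r * velT v) i j =
      velT v 0 j * r i^7 + velT v 1 j * r i^6 + velT v 2 j*r i^5 + velT v 3 j * r i^4
      + velT v 4 j*r i^3 + velT v 5 j*r i^2 + velT v 6 j * r i + velT v 7 j := by
  simp [Matrix.mul_apply, revV, Fin.sum_univ_succ]
  ring

lemma col_lambda (v : Fin 9 → ℂ) (r : Fin 8 → ℂ) (h : ∀ i, octic v (r i) = 0) (i : Fin 8) :
    (evalMat r * Jmat v) i.succ 5 = 0 := by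
  rw [evalMat_mul_succ, ← h i]
  simp [Jmat, c5, octic]

lemma col_0 (v : Fin 9 → ℂ) (r : Fin 8 → ℂ) (h : ∀ i, octic v (r i) = 0) (i : Fin 8) :
    (evalMat r * Jmat v) i.succ 0 = octicD v (r i) * (revV r * velT v) i 0 := by
  rw [evalMat_mul_succ, revV_mul]
  have h := h i
  generalize r i = x at *
  simp [Jmat, c0, velT, octicD]
  unfold octic at h
  linear_combination ((12902400)*v 6*x^0 + (51609600)*v 5*x^1 + (90316800)*v 4*x^2 + (90316800)*v 3*x^3 + (54190080)*v 2*x^4 + (18063360)*v 1*x^5 + (2580480)*v 0*x^6) * h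

lemma col_1 (v : Fin 9 → ℂ) (r : Fin 8 → ℂ) (h : ∀ i, octic v (r i) = 0) (i : Fin 8) :
    (evalMat r * Jmat v) i.succ 1 = octicD v (r i) * (revV r * velT v) i 1 := by
  rw [evalMat_mul_succ, revV_mul]
  have h := h i
  generalize r i = x at *
  simp [Jmat, c1, velT, octicD]
  unfold octic at h
  linear_combination ((-25804800)*v 5*x^0 + (-77414400)*v 4*x^1 + (-90316800)*v 3*x^2 + (-54190080)*v 2*x^3 + (-18063360)*v 1*x^4 + (-2580480)*v 0*x^5) * h

lemma col_2 (v : Fin 9 → ℂ) (r : Fin 8 → ℂ) (h : ∀ i, octic v (r i) = 0) (i : Fin 8) :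
    (evalMat r * Jmat v) i.succ 2 = octicD v (r i) * (revV r * velT v) i 2 := by
  rw [evalMat_mul_succ, revV_mul]
  have h := h i
  generalize r i = x at *
  simp [Jmat, c2, velT, octicD]
  unfold octic at h
  linear_combination ((25804800)*v 4*x^0 + (64512000)*v 3*x^1 + (54190080)*v 2*x^2 + (18063360)*v 1*x^3 + (2580480)*v 0*x^4) * h

lemma col_3 (v : Fin 9 → ℂ) (r : Fin 8 → ℂ) (h : ∀ i, octic v (r i) = 0) (i : Fin 8) :
    (evalMat r * Jmat v) i.succ 3 = octicD v (r i) * (revV r * velT v) i 3 := by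
  rw [evalMat_mul_succ, revV_mul]
  have h := h i
  generalize r i = x at *
  simp [Jmat, c3, velT, octicD]
  unfold octic at h
  linear_combination ((-12902400)*v 3*x^0 + (-28385280)*v 2*x^1 + (-18063360)*v 1*x^2 + (-2580480)*v 0*x^3) * h

lemma col_4 (v : Fin 9 → ℂ) (r : Fin 8 → ℂ) (h : ∀ i, octic v (r i) = 0) (i : Fin 8) :
    (evalMat r * Jmat v) i.succ 4 = octicD v (r i) * (revV r * velT v) i 4 := by
  rw [evalMat_mul_succ, revV_mul]
  have h := h i
  generalize r i = x at *
  simp [Jmat, c4, velT, octicD]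
  unfold octic at h
  linear_combination ((2580480)*v 2*x^0 + (5160960)*v 1*x^1 + (2580480)*v 0*x^2) * h

lemma col_6 (v : Fin 9 → ℂ) (r : Fin 8 → ℂ) (h : ∀ i, octic v (r i) = 0) (i : Fin 8) :
    (evalMat r * Jmat v) i.succ 6 = octicD v (r i) * (revV r * velT v) i 5 := by
  rw [evalMat_mul_succ, revV_mul]
  have h := h i
  generalize r i = x at *
  simp [Jmat, c6, velT, octicD]
  unfold octic at h
  linear_combination ((-16)*x^1) * h

lemma col_7 (v : Fin 9 → ℂ) (r : Fin 8 → ℂ) (h : ∀ i, octic v (r i) = 0) (i : Fin 8) :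
    (evalMat r * Jmat v) i.succ 7 = octicD v (r i) * (revV r * velT v) i 6 := by
  rw [evalMat_mul_succ, revV_mul]
  have h := h i
  generalize r i = x at *
  simp [Jmat, c7, velT, octicD]
  unfold octic at h
  linear_combination ((-16)*x^0) * h

lemma col_8 (v : Fin 9 → ℂ) (r : Fin 8 → ℂ) (h : ∀ i, octic v (r i) = 0) (i : Fin 8) :
    (evalMat r * Jmat v) i.succ 8 = octicD v (r i) * (revV r * velT v) i 7 := by
  rw [evalMat_mul_succ, revV_mul]
  have h := h i
  generalize r i = x at *
  simp [Jmat, c8, velT, octicD]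
  unfold octic at h
  linear_combination (0) * h

lemma col_all (v : Fin 9 → ℂ) (r : Fin 8 → ℂ) (h : ∀ i, octic v (r i) = 0) (i j : Fin 8) :
    (evalMat r * Jmat v) i.succ ((5 : Fin 9).succAbove j)
      = octicD v (r i) * (revV r * velT v) i j := by
  fin_cases j
  · exact col_0 v r h i
  · exact col_1 v r h i
  · exact col_2 v r h i
  · exact col_3 v r h i
  · exact col_4 v r h i
  · exact col_6 v r h i
  · exact col_7 v r h i
  · exact col_8 v r h i

lemma det_mul_J (v : Fin 9 → ℂ) (r : Fin 8 → ℂ) (h : ∀ i, octic v (r i) = 0) :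
    (evalMat r).det * (Jmat v).det
      = - v 0 * ((∏ i, octicD v (r i)) * ((revV r).det * (velT v).det)) := by
  rw [← Matrix.det_mul, ← Matrix.det_mul, Matrix.det_succ_column _ 5, Fin.sum_univ_succ,
    Finset.sum_eq_zero, ← Matrix.det_mul_column]
  · rw [evalMat_mul_zero, add_zero]
    have : (evalMat r * Jmat v).submatrix (Fin.succAbove 0) (Fin.succAbove 5)
        = Matrix.of fun i j => octicD v (r i) * (revV r * velT v) i j := by
      ext i j
      simpa using col_all v r h i j
    rw [this]
    have h0 : Jmat v 0 5 = v 0 := by simp [Jmat, c5]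
    rw [h0]
    norm_num
  · intro i _
    rw [col_lambda v r h]
    simp

lemma det_revV_ne (r : Fin 8 → ℂ) (hr : Function.Injective r) : (revV r).det ≠ 0 := by
  have : revV r = (Matrix.vandermonde r).submatrix id Fin.revPerm := by
    ext i j
    simp [revV, Matrix.vandermonde, Fin.val_rev]
  rw [this, Matrix.det_permute']
  refine mul_ne_zero ?_ (Matrix.det_vandermonde_ne_zero_iff.2 hr)
  rcases Int.units_eq_one_or (Equiv.Perm.sign (Fin.revPerm : Equiv.Perm (Fin 8))) with h | h <;>
    simp [h]

lemma exists_detJ_const : ∃ c : ℂ, c ≠ 0 ∧ ∀ (v : Fin 9 → ℂ) (r : Fin 8 → ℂ),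
    Function.Injective r → (∀ i, octic v (r i) = 0) →
    (Jmat v).det = c * (v 0 ^ 6 * ∏ i, octicD v (r i)) := by
  obtain ⟨c, hc, hT⟩ := det_velT
  set b : ℂ := ∏ k : Fin 8, (Nat.choose 8 (k + 1) : ℂ) with hb
  have hb0 : b ≠ 0 := by
    rw [hb, Finset.prod_ne_zero_iff]
    intro k _
    exact_mod_cast (Nat.choose_pos (by omega)).ne'
  refine ⟨- c / b, div_ne_zero (neg_ne_zero.2 hc) hb0, fun v r hr h => ?_⟩
  have h1 := det_mul_J v r h
  rw [det_evalMat, hT, ← hb] at h1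
  have h2 := det_revV_ne r hr
  have h3 : b * (Jmat v).det = - c * (v 0 ^ 6 * ∏ i, octicD v (r i)) := by
    apply mul_left_cancel₀ h2
    linear_combination h1
  field_simp
  linear_combination h3

/-- The binary form with roots `[z i : w i]`. -/
def form (z w : Fin 8 → ℂ) : MvPolynomial (Fin 2) ℂ :=
  ∏ i : Fin 8, (MvPolynomial.C (w i) * X 0 - MvPolynomial.C (z i) * X 1)

lemma form_homog (z w : Fin 8 → ℂ) : (form z w).IsHomogeneous 8 := by
  have := MvPolynomial.IsHomogeneous.prod (Finset.univ : Finset (Fin 8))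
    (fun i => (MvPolynomial.C (w i) * X 0 - MvPolynomial.C (z i) * X 1 : MvPolynomial (Fin 2) ℂ))
    (fun _ => 1) (fun i _ => ((isHomogeneous_X ℂ 0).C_mul (w i)).sub
      ((isHomogeneous_X ℂ 1).C_mul (z i)))
  simpa [form] using this

lemma eval_form (z w : Fin 8 → ℂ) (x y : ℂ) :
    MvPolynomial.eval ![x, y] (form z w) = ∏ i, (w i * x - z i * y) := by
  simp [form]

lemma octic_eq_sum (v : Fin 9 → ℂ) (x : ℂ) :
    octic v x = ∑ k : Fin 9, (Nat.choose 8 k : ℂ) * v k * x ^ (8 - (k : ℕ)) := by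
  have h2 : Nat.choose 8 2 = 28 := by decide
  have h3 : Nat.choose 8 3 = 56 := by decide
  have h4 : Nat.choose 8 4 = 70 := by decide
  have h5 : Nat.choose 8 5 = 56 := by decide
  have h6 : Nat.choose 8 6 = 28 := by decide
  simp [octic, Fin.sum_univ_succ, h2, h3, h4, h5, h6]
  ring

lemma sum_coeffVec (z w : Fin 8 → ℂ) (x y : ℂ) :
    ∑ k : Fin 9, (Nat.choose 8 k : ℂ) * coeffVec z w k * (x ^ (8 - (k : ℕ)) * y ^ (k : ℕ))
      = ∏ i, (w i * x - z i * y) := by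
  rw [← eval_form, MvPolynomial.eval_eq']
  let g : Fin 9 → (Fin 2 →₀ ℕ) := fun k =>
    Finsupp.single (0 : Fin 2) (8 - (k : ℕ)) + Finsupp.single (1 : Fin 2) (k : ℕ)
  have hg0 : ∀ k, g k 0 = 8 - (k : ℕ) := fun k => by simp [g]
  have hg1 : ∀ k, g k 1 = (k : ℕ) := fun k => by simp [g]
  have hinj : Function.Injective g := fun a b hab => by
    have := DFunLike.congr_fun hab 1
    rw [hg1, hg1] at this
    exact Fin.ext this
  have hsub : (form z w).support ⊆ Finset.univ.image g := by
    intro d hd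
    have hdeg := form_homog z w (MvPolynomial.mem_support_iff.1 hd)
    have h8 : d 0 + d 1 = 8 := by
      rw [← hdeg, Finsupp.weight_apply, Finsupp.sum_fintype _ _ (by simp)]
      simp
    refine Finset.mem_image.2 ⟨⟨d 1, by omega⟩, Finset.mem_univ _, ?_⟩
    ext i
    fin_cases i
    · simp [g]; omega
    · simp [g]
  rw [Finset.sum_subset hsub, Finset.sum_image (fun a _ b _ hab => hinj hab)]
  · refine Finset.sum_congr rfl fun k _ => ?_
    have hk : (Nat.choose 8 k : ℂ) ≠ 0 := by
      exact_mod_cast (Nat.choose_pos (by omega)).ne'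
    have : (Nat.choose 8 k : ℂ) * coeffVec z w k = coeff (g k) (form z w) := by
      simp only [coeffVec, form, g]
      field_simp
    rw [this]
    simp [hg0, hg1, Fin.prod_univ_two]
  · intro d _ hd
    rw [MvPolynomial.notMem_support_iff.1 hd, zero_mul]

lemma octic_coeffVec (z w : Fin 8 → ℂ) (x : ℂ) :
    octic (coeffVec z w) x = ∏ i, (w i * x - z i) := by
  simpa [octic_eq_sum] using sum_coeffVec z w x 1

lemma octicD_deriv (v : Fin 9 → ℂ) (x : ℂ) : HasDerivAt (octic v) (octicD v x) x := by
  have hp : ∀ (a : ℂ) (n : ℕ), HasDerivAt (fun x : ℂ => a * x ^ n) (a * (n * x ^ (n - 1))) x :=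
    fun a n => (hasDerivAt_pow n x).const_mul a
  have h := ((((((((hp (v 0) 8).add (hp (8 * v 1) 7)).add (hp (28 * v 2) 6)).add
    (hp (56 * v 3) 5)).add (hp (70 * v 4) 4)).add (hp (56 * v 5) 3)).add (hp (28 * v 6) 2)).add
    (hp (8 * v 7) 1)).add (hp (v 8) 0)
  refine (h.congr_deriv ?_).congr_of_eventuallyEq (Filter.Eventually.of_forall fun y => ?_)
  · simp [octicD]
    ring
  · simp [octic]

lemma octicD_coeffVec (z w : Fin 8 → ℂ) (i : Fin 8) (hw : w i ≠ 0) :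
    octicD (coeffVec z w) (z i / w i)
      = w i * ∏ j ∈ Finset.univ.erase i, (w j * (z i / w i) - z j) := by
  have h1 := octicD_deriv (coeffVec z w) (z i / w i)
  have h : octic (coeffVec z w) = fun x => ∏ i, (w i * x - z i) :=
    funext (octic_coeffVec z w)
  rw [h] at h1
  have h2 : HasDerivAt (fun x => ∏ i, (w i * x - z i))
      (∑ k, (∏ j ∈ Finset.univ.erase k, (w j * (z i / w i) - z j)) • w k) (z i / w i) := by
    apply HasDerivAt.fun_finsetProd
    intro k _
    simpa using ((hasDerivAt_id (z i / w i)).const_mul (w k)).sub_const (z k)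
  rw [h1.unique h2, Finset.sum_eq_single i]
  · rw [smul_eq_mul, mul_comm]
  · intro k _ hk
    rw [Finset.prod_eq_zero (i := i) (by simp [Ne.symm hk]), zero_smul]
    field_simp
    simp
  · simp

lemma coeffVec_zero (z w : Fin 8 → ℂ) : coeffVec z w 0 = ∏ i, w i := by
  simpa [Fin.sum_univ_succ] using sum_coeffVec z w 1 0

lemma prod_pairs (f : Fin 8 → Fin 8 → ℂ) :
    ∏ i, ∏ j ∈ Finset.univ.erase i, f i j
      = ∏ i : Fin 8, ∏ j ∈ Finset.Ioi i, (f i j * f j i) := by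
  have h1 : ∀ i : Fin 8, Finset.univ.erase i = Finset.Ioi i ∪ Finset.Iio i := by
    intro i
    ext j
    simp only [Finset.mem_erase, Finset.mem_univ, and_true, Finset.mem_union, Finset.mem_Ioi,
      Finset.mem_Iio]
    exact ⟨fun h => (lt_or_gt_of_ne h).symm, fun h => h.elim ne_of_gt ne_of_lt⟩
  have h2 : ∀ i : Fin 8, Disjoint (Finset.Ioi i) (Finset.Iio i) := by
    intro i
    rw [Finset.disjoint_left]
    intro j hj hj'
    exact lt_asymm (Finset.mem_Ioi.1 hj) (Finset.mem_Iio.1 hj')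
  simp_rw [h1, Finset.prod_union (h2 _), Finset.prod_mul_distrib]
  congr 1
  apply Finset.prod_comm'
  simp

lemma good_case (c : ℂ) (hc : ∀ (v : Fin 9 → ℂ) (r : Fin 8 → ℂ),
    Function.Injective r → (∀ i, octic v (r i) = 0) →
    (Jmat v).det = c * (v 0 ^ 6 * ∏ i, octicD v (r i))) (z w : Fin 8 → ℂ)
    (hw : ∀ i, w i ≠ 0) (hz : ∀ i j, i ≠ j → z i * w j - z j * w i ≠ 0) :
    (Jmat (coeffVec z w)).det
        = c * ∏ i : Fin 8, ∏ j ∈ Finset.Ioi i, (z i * w j - z j * w i) ^ 2 := by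
  rw [hc (coeffVec z w) (fun i => z i / w i)]
  · congr 1
    have h1 : ∀ i, w i ^ 6 * octicD (coeffVec z w) (z i / w i)
        = ∏ j ∈ Finset.univ.erase i, (z i * w j - z j * w i) := by
      intro i
      have h2 : ∏ j ∈ Finset.univ.erase i, (z i * w j - z j * w i)
          = ∏ j ∈ Finset.univ.erase i, (w i * (w j * (z i / w i) - z j)) := by
        refine Finset.prod_congr rfl fun j _ => ?_
        have := hw i
        field_simp
      rw [h2, octicD_coeffVec z w i (hw i), Finset.prod_mul_distrib, Finset.prod_const]
      simp
      ring
    rw [coeffVec_zero, ← Finset.prod_pow, ← Finset.prod_mul_distrib]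
    simp_rw [h1]
    rw [prod_pairs]
    have h3 : ∀ i j : Fin 8, (z i * w j - z j * w i) * (z j * w i - z i * w j)
        = (-1) * (z i * w j - z j * w i) ^ 2 := fun i j => by ring
    simp_rw [h3, Finset.prod_mul_distrib]
    have h4 : ∏ i : Fin 8, ∏ j ∈ Finset.Ioi i, (-1 : ℂ) = 1 := by
      simp [Fin.prod_univ_succ, Fin.card_Ioi]
      norm_num
    rw [h4, one_mul]
  · intro i j hij
    by_contra hne
    apply hz i j hne
    have := hw i
    have := hw j
    simp only at hij
    field_simp at hij
    linear_combination hij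
  · intro i
    rw [octic_coeffVec]
    apply Finset.prod_eq_zero (Finset.mem_univ i)
    have := hw i
    field_simp
    simp

lemma continuous_c0 (i : Fin 9) : Continuous (fun v : Fin 9 → ℂ => c0 v i) := by
  unfold c0
  fin_cases i <;> dsimp <;> fun_prop

lemma continuous_c1 (i : Fin 9) : Continuous (fun v : Fin 9 → ℂ => c1 v i) := by
  unfold c1
  fin_cases i <;> dsimp <;> fun_prop

lemma continuous_c2 (i : Fin 9) : Continuous (fun v : Fin 9 → ℂ => c2 v i) := by
  unfold c2
  fin_cases i <;> dsimp <;> fun_prop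

lemma continuous_c3 (i : Fin 9) : Continuous (fun v : Fin 9 → ℂ => c3 v i) := by
  unfold c3
  fin_cases i <;> dsimp <;> fun_prop

lemma continuous_c4 (i : Fin 9) : Continuous (fun v : Fin 9 → ℂ => c4 v i) := by
  unfold c4
  fin_cases i <;> dsimp <;> fun_prop

lemma continuous_c6 (i : Fin 9) : Continuous (fun v : Fin 9 → ℂ => c6 v i) := by
  unfold c6
  fin_cases i <;> dsimp <;> fun_prop

lemma continuous_c7 (i : Fin 9) : Continuous (fun v : Fin 9 → ℂ => c7 v i) := by
  unfold c7
  fin_cases i <;> dsimp <;> fun_prop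

lemma continuous_c8 (i : Fin 9) : Continuous (fun v : Fin 9 → ℂ => c8 v i) := by
  unfold c8
  fin_cases i <;> dsimp <;> fun_prop

lemma continuous_Jmat : Continuous (fun v : Fin 9 → ℂ => (Jmat v).det) := by
  apply Continuous.matrix_det
  refine continuous_pi fun i => continuous_pi fun j => ?_
  fin_cases j
  · exact continuous_const.mul (continuous_c0 i)
  · exact continuous_const.mul (continuous_c1 i)
  · exact continuous_const.mul (continuous_c2 i)
  · exact continuous_const.mul (continuous_c3 i)
  · exact continuous_const.mul (continuous_c4 i)
  · exact continuous_apply i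
  · exact continuous_c6 i
  · exact continuous_c7 i
  · exact continuous_c8 i

lemma continuous_Jmat_comp (g : ℂ → Fin 9 → ℂ) (hg : Continuous g) :
    Continuous (fun e => (Jmat (g e)).det) := by
  obtain ⟨F, hF⟩ : ∃ F : (Fin 9 → ℂ) → ℂ, ∀ v, F v = (Jmat v).det := ⟨_, fun _ => rfl⟩
  have h : Continuous F := by
    rw [funext hF]
    exact continuous_Jmat
  simp only [← hF]
  exact h.comp hg

lemma continuous_coeffVec (z w : ℂ → Fin 8 → ℂ) (hz : ∀ i, Continuous fun e => z e i)
    (hw : ∀ i, Continuous fun e => w e i) : Continuous fun e => coeffVec (z e) (w e) := by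
  have h : ∀ (s : Finset (Fin 8)) (d : Fin 2 →₀ ℕ), Continuous fun e =>
      coeff d (∏ i ∈ s, (MvPolynomial.C (w e i) * X 0 - MvPolynomial.C (z e i) * X 1)) := by
    intro s
    induction s using Finset.induction_on with
    | empty => intro d; simpa using continuous_const
    | insert a s ha ih =>
      intro d
      rw [show (fun e => coeff d (∏ i ∈ insert a s,
          (MvPolynomial.C (w e i) * X 0 - MvPolynomial.C (z e i) * X 1))) = fun e =>
          ∑ p ∈ Finset.HasAntidiagonal.antidiagonal d, (w e a * coeff p.1 (X 0) - z e a * coeff p.1 (X 1)) *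
            coeff p.2 (∏ i ∈ s, (MvPolynomial.C (w e i) * X 0 - MvPolynomial.C (z e i) * X 1))
          from funext fun e => by
            rw [Finset.prod_insert ha, coeff_mul]
            simp only [coeff_sub, coeff_C_mul]]
      refine continuous_finsetSum _ fun p _ => ?_
      exact (((hw a).mul continuous_const).sub ((hz a).mul continuous_const)).mul (ih _)
  exact continuous_pi fun k => (h Finset.univ _).div_const _

lemma eventually_ne (a b c : ℂ) (ha : ¬ (a = 0 ∧ b = 0)) :
    ∀ᶠ e in nhdsWithin (0 : ℂ) {0}ᶜ, a * e ^ 2 + b * e + c ≠ 0 := by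
  let p : Polynomial ℂ := Polynomial.C a * Polynomial.X ^ 2 + Polynomial.C b * Polynomial.X
    + Polynomial.C c
  have hp : p ≠ 0 := by
    intro h
    apply ha
    have h1 := congrArg (fun q => Polynomial.coeff q 1) h
    have h2 := congrArg (fun q => Polynomial.coeff q 2) h
    simp [p, Polynomial.coeff_C, Polynomial.coeff_X_pow] at h1 h2
    exact ⟨h2, h1⟩
  have hfin : {e : ℂ | p.IsRoot e}.Finite := Polynomial.finite_setOfPred_isRoot hp
  have := nhdsNE_le_cofinite (0 : ℂ) hfin.compl_mem_cofinite
  filter_upwards [this] with e he h0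
  apply he
  simpa [p, Polynomial.IsRoot] using h0

/-- det J(v) is a nonzero scalar multiple of the discriminant of
the binary octic v; the discriminant is expressed through the roots as
∏_{i<j} (zᵢwⱼ - zⱼwᵢ)². -/
theorem detJ_is_multiple_of_discriminant :
    ∃ cst : ℂ, cst ≠ 0 ∧ ∀ z w : Fin 8 → ℂ,
      (Jmat (coeffVec z w)).det
        = cst * ∏ i : Fin 8, ∏ j ∈ Finset.Ioi i, (z i * w j - z j * w i) ^ 2 := by
  obtain ⟨c, hc0, hc⟩ := exists_detJ_const
  refine ⟨c, hc0, fun z w => ?_⟩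
  let Z : ℂ → Fin 8 → ℂ := fun e i => z i + e * (i : ℕ)
  let W : ℂ → Fin 8 → ℂ := fun e i => w i + e
  have hZ : ∀ i, Continuous fun e => Z e i := fun i => by fun_prop
  have hW : ∀ i, Continuous fun e => W e i := fun i => by fun_prop
  have hl : Continuous fun e => (Jmat (coeffVec (Z e) (W e))).det :=
    continuous_Jmat_comp (fun e => coeffVec (Z e) (W e)) (continuous_coeffVec Z W hZ hW)
  have hr : Continuous fun e => c * ∏ i : Fin 8, ∏ j ∈ Finset.Ioi i,
      (Z e i * W e j - Z e j * W e i) ^ 2 :=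
    continuous_const.mul (continuous_finsetProd _ fun i _ => continuous_finsetProd _ fun j _ =>
      (((hZ i).mul (hW j)).sub ((hZ j).mul (hW i))).pow 2)
  have h1 : ∀ i, ∀ᶠ e in nhdsWithin (0 : ℂ) {0}ᶜ, W e i ≠ 0 := by
    intro i
    filter_upwards [eventually_ne 0 1 (w i) (by simp)] with e he h
    apply he
    linear_combination h
  have h2 : ∀ i j, ∀ᶠ e in nhdsWithin (0 : ℂ) {0}ᶜ,
      i ≠ j → Z e i * W e j - Z e j * W e i ≠ 0 := by
    intro i j
    by_cases hij : i = j
    · simp [hij]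
    · have hne : ((i : ℕ) : ℂ) - ((j : ℕ) : ℂ) ≠ 0 := by
        rw [sub_ne_zero]
        exact_mod_cast fun h => hij (Fin.ext h)
      filter_upwards [eventually_ne (((i : ℕ) : ℂ) - ((j : ℕ) : ℂ))
        (z i + (i : ℕ) * w j - z j - (j : ℕ) * w i) (z i * w j - z j * w i)
        (fun h => hne h.1)] with e he _ h
      apply he
      simp only [Z, W] at h
      linear_combination h
  have h3 : ∀ᶠ e in nhdsWithin (0 : ℂ) {0}ᶜ, (Jmat (coeffVec (Z e) (W e))).det
      = c * ∏ i : Fin 8, ∏ j ∈ Finset.Ioi i, (Z e i * W e j - Z e j * W e i) ^ 2 := by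
    filter_upwards [Filter.eventually_all.2 h1,
      Filter.eventually_all.2 fun i => Filter.eventually_all.2 (h2 i)] with e ha hb
    exact good_case c hc _ _ ha hb
  have h4 := tendsto_nhds_unique
    ((hl.tendsto 0).mono_left (nhdsWithin_le_nhds (s := {0}ᶜ)) |>.congr' h3)
    ((hr.tendsto 0).mono_left nhdsWithin_le_nhds)
  simpa [Z, W] using h4
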